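/- arXiv:1208.5278 — 3 statements merged into one kernel-verified Lean document; each statement's English description precedes it below -/
import Mathlib

section
/- Let q ∈ ℂ with q ≠ 0 and q² ≠ 1, set [n]_q := (qⁿ − q⁻ⁿ)/(q − q⁻¹) and ⟨n⟩_q := qⁿ + q⁻ⁿ for n ∈ ℤ. Then for all m, n, l ∈ ℤ: ⟨l⟩_q·[m−n]_q·[l−m−n]_q + ⟨m⟩_q·[n−l]_q·[m−n−l]_q + ⟨n⟩_q·[l−m]_q·[n−l−m]_q = 0. (This is the structure-constant form of the q-deformed Jacobi identity (q^l+q^{−l})[[L_m,L_n]_q,L_l]_q + cyclic permutations = 0.) -/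
/-- The q-number `[n]_q = (q^n - q^(-n))/(q - q⁻¹)`. -/
noncomputable def qnum (q : ℂ) (n : ℤ) : ℂ := (q ^ n - q ^ (-n)) / (q - q⁻¹)

/-- `⟨n⟩_q = q^n + q^(-n)`. -/
noncomputable def qang (q : ℂ) (n : ℤ) : ℂ := q ^ n + q ^ (-n)

/-- The structure-constant form of the q-deformed Jacobi identity:
`⟨l⟩[m−n][l−m−n] + ⟨m⟩[n−l][m−n−l] + ⟨n⟩[l−m][n−l−m] = 0`. -/
theorem q_deformed_jacobi_structure_constants (q : ℂ) (hq0 : q ≠ 0)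
    (hq2 : q ^ (2 : ℕ) ≠ 1) (m n l : ℤ) :
    qang q l * qnum q (m - n) * qnum q (l - m - n)
      + qang q m * qnum q (n - l) * qnum q (m - n - l)
      + qang q n * qnum q (l - m) * qnum q (n - l - m) = 0 := by
  have hm : q ^ m ≠ 0 := zpow_ne_zero m hq0
  have hn : q ^ n ≠ 0 := zpow_ne_zero n hq0
  have hl : q ^ l ≠ 0 := zpow_ne_zero l hq0
  simp only [qang, qnum, zpow_neg, zpow_sub₀ hq0]
  generalize q ^ m = a at *
  generalize q ^ n = b at *
  generalize q ^ l = c at *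
  generalize q - q⁻¹ = d
  by_cases hd : d = 0
  · simp [hd]
  · field_simp
    ring
end

section
/- Let G be an additive abelian group, L a ℂ-vector space with an internal direct sum decomposition L = ⊕_{g∈G} L_g, [·,·] a bilinear skew-symmetric bracket on L with [L_g, L_h] ⊆ L_{g+h} and satisfying the Hom-Jacobi identity with respect to a linear map α: L → L with α(L_g) ⊆ L_g. Let V = ⊕_{g∈G} V_g be a ℂ-vector space with a linear action ρ: L → End(V), a linear map β_V: V → V, such that ρ([x,y]) ∘ β_V = ρ(α(x)) ∘ ρ(y) − ρ(α(y)) ∘ ρ(x), ρ(L_g)(V_h) ⊆ V_{g+h}, and β_V(V_g) ⊆ V_g. Let D: L → V be a derivation, i.e. a linear map with D ∘ α = β_V ∘ D and D([x,y]) = ρ(x)(D(y)) − ρ(y)(D(x)) for all x,y ∈ L. Then there exists a family (D_g)_{g∈G} of linear maps L → V such that: each D_g satisfies D_g ∘ α = β_V ∘ D_g and D_g([x,y]) = ρ(x)(D_g(y)) − ρ(y)(D_g(x)), each D_g is homogeneous of degree g (D_g(L_h) ⊆ V_{g+h} for all h ∈ G), and for every u ∈ L the set {g ∈ G : D_g(u)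 ≠ 0} is finite with D(u) = Σ_{g∈G} D_g(u). -/
theorem hl_induction {G : Type*} [DecidableEq G] {V : Type*}
    [AddCommGroup V] [Module ℂ V] (𝒱 : G → Submodule ℂ V)
    (hV : DirectSum.IsInternal 𝒱) {P : V → Prop}
    (hom : ∀ g, ∀ v ∈ 𝒱 g, P v) (h0 : P 0) (hadd : ∀ u v, P u → P v → P (u + v)) (v : V) :
    P v := by
  have hv : v ∈ ⨆ g, 𝒱 g := by rw [hV.submodule_iSup_eq_top]; trivial
  exact Submodule.iSup_induction 𝒱 (motive := P) hv hom h0 hadd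

theorem hl_extend {G : Type*} [DecidableEq G] {L V : Type*}
    [AddCommGroup L] [Module ℂ L] [AddCommGroup V] [Module ℂ V] (ℒ : G → Submodule ℂ L)
    (hL : DirectSum.IsInternal ℒ) (f : G → (L →ₗ[ℂ] V)) :
    ∃ F : L →ₗ[ℂ] V, ∀ g, ∀ x ∈ ℒ g, F x = f g x := by
  let e := LinearEquiv.ofBijective (DirectSum.coeLinearMap ℒ) hL
  refine ⟨(DirectSum.toModule ℂ G V (fun h => (f h).comp (ℒ h).subtype)).comp
    e.symm.toLinearMap, ?_⟩
  intro g x hx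
  have h1 : e.symm x = DirectSum.lof ℂ G (fun i => ℒ i) g ⟨x, hx⟩ := by
    rw [LinearEquiv.symm_apply_eq]
    exact (DirectSum.coeLinearMap_lof ℒ g ⟨x, hx⟩).symm
  simp [h1]

theorem hl_proj {G : Type*} [DecidableEq G] {V : Type*}
    [AddCommGroup V] [Module ℂ V] (𝒱 : G → Submodule ℂ V)
    (hV : DirectSum.IsInternal 𝒱) :
    ∃ p : G → (V →ₗ[ℂ] V), (∀ g v, p g v ∈ 𝒱 g) ∧
      (∀ g h, ∀ v ∈ 𝒱 h, p g v = if h = g then v else 0) ∧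
      (∀ v, (Function.support fun g => p g v).Finite) ∧
      (∀ v, v = ∑ᶠ g, p g v) := by
  choose p hp using fun g : G => hl_extend (V := V) 𝒱 hV
    (fun h => if h = g then LinearMap.id else 0)
  have hp' : ∀ g h, ∀ v ∈ 𝒱 h, p g v = if h = g then v else 0 := by
    intro g h v hv
    rw [hp g h v hv]
    split_ifs <;> simp
  have hfin : ∀ v, (Function.support fun g => p g v).Finite := by
    intro v
    induction v using hl_induction 𝒱 hV with
    | hom h v hv =>
      refine (Set.finite_singleton h).subset ?_
      intro g hg
      by_contra hne
      apply hg
      change p g v = 0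
      rw [hp' g h v hv, if_neg (fun e => hne e.symm)]
    | h0 => simp
    | hadd u v hu hv =>
      simp only [map_add]
      exact (hu.union hv).subset (Function.support_add _ _)
  refine ⟨p, ?_, hp', hfin, ?_⟩
  · intro g v
    induction v using hl_induction 𝒱 hV with
    | hom h v hv =>
      rw [hp' g h v hv]
      split_ifs with e
      · exact e ▸ hv
      · exact zero_mem _
    | h0 => simp
    | hadd u v hu hv => rw [map_add]; exact add_mem hu hv
  · intro v
    induction v using hl_induction 𝒱 hV with
    | hom h v hv =>
      rw [finsum_eq_single _ h]
      · rw [hp' h h v hv, if_pos rfl]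
      · intro g hg
        rw [hp' g h v hv, if_neg (fun e => hg e.symm)]
    | h0 => simp
    | hadd u v hu hv =>
      simp only [map_add]
      rw [finsum_add_distrib (hfin u) (hfin v), ← hu, ← hv]

/-- Every derivation of a `G`-graded Hom-Lie algebra `L` with values in a
`G`-graded Hom-`L`-module `V` decomposes into homogeneous components: there is
a family `(D_g)_{g ∈ G}` of derivations, `D_g` homogeneous of degree `g`, with
`D(u) = Σ_g D_g(u)` (finitely many nonzero terms) for every `u ∈ L`. -/
theorem graded_derivation_decomposition
    {G : Type*} [AddCommGroup G] [DecidableEq G] {L V : Type*}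
    [AddCommGroup L] [Module ℂ L] [AddCommGroup V] [Module ℂ V]
    (ℒ : G → Submodule ℂ L) (𝒱 : G → Submodule ℂ V)
    (hLint : DirectSum.IsInternal ℒ) (hVint : DirectSum.IsInternal 𝒱)
    (br : L →ₗ[ℂ] L →ₗ[ℂ] L) (α : L →ₗ[ℂ] L)
    (hskew : ∀ x y : L, br x y = - br y x)
    (hjac : ∀ x y z : L,
      br (br x y) (α z) + br (br y z) (α x) + br (br z x) (α y) = 0)
    (hbrgr : ∀ g h : G, ∀ x ∈ ℒ g, ∀ y ∈ ℒ h, br x y ∈ ℒ (g + h))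
    (hαgr : ∀ g : G, ∀ x ∈ ℒ g, α x ∈ ℒ g)
    (ρ : L →ₗ[ℂ] V →ₗ[ℂ] V) (βV : V →ₗ[ℂ] V)
    (hrep : ∀ (x y : L) (v : V),
      ρ (br x y) (βV v) = ρ (α x) (ρ y v) - ρ (α y) (ρ x v))
    (hρgr : ∀ g h : G, ∀ x ∈ ℒ g, ∀ v ∈ 𝒱 h, ρ x v ∈ 𝒱 (g + h))
    (hβgr : ∀ g : G, ∀ v ∈ 𝒱 g, βV v ∈ 𝒱 g)
    (D : L →ₗ[ℂ] V)
    (hDα : ∀ x : L, D (α x) = βV (D x))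
    (hDder : ∀ x y : L, D (br x y) = ρ x (D y) - ρ y (D x)) :
    ∃ Dg : G → (L →ₗ[ℂ] V),
      (∀ g : G,
        (∀ x : L, Dg g (α x) = βV (Dg g x)) ∧
        (∀ x y : L, Dg g (br x y) = ρ x (Dg g y) - ρ y (Dg g x)) ∧
        (∀ h : G, ∀ x ∈ ℒ h, Dg g x ∈ 𝒱 (g + h))) ∧
      (∀ u : L,
        (Function.support fun g => Dg g u).Finite ∧ D u = ∑ᶠ g : G, Dg g u) := by
  obtain ⟨p, hpm, hp, hpf, hps⟩ := hl_proj 𝒱 hVint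
  have hpβ : ∀ g v, p g (βV v) = βV (p g v) := by
    intro g v
    induction v using hl_induction 𝒱 hVint with
    | hom h v hv =>
      rw [hp g h v hv, hp g h _ (hβgr h v hv)]
      split_ifs <;> simp
    | h0 => simp
    | hadd u v hu hv => simp only [map_add, hu, hv]
  have hpρ : ∀ h g, ∀ x ∈ ℒ h, ∀ v, p (h + g) (ρ x v) = ρ x (p g v) := by
    intro h g x hx v
    induction v using hl_induction 𝒱 hVint with
    | hom k v hv =>
      rw [hp g k v hv, hp _ _ _ (hρgr h k x hx v hv)]
      simp only [add_right_inj]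
      split_ifs <;> simp
    | h0 => simp
    | hadd u v hu hv => simp only [map_add, hu, hv]
  choose Dg hDg using fun g : G => hl_extend ℒ hLint (fun h => (p (g + h)).comp D)
  simp only [LinearMap.comp_apply] at hDg
  refine ⟨Dg, fun g => ⟨?_, ?_, ?_⟩, ?_⟩
  · intro x
    induction x using hl_induction ℒ hLint with
    | hom h x hx => rw [hDg g h x hx, hDg g h _ (hαgr h x hx), hDα, hpβ]
    | h0 => simp
    | hadd u v hu hv => simp only [map_add, hu, hv]
  · intro x y
    induction x using hl_induction ℒ hLint with
    | hom h x hx =>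
      induction y using hl_induction ℒ hLint with
      | hom k y hy =>
        rw [hDg g h x hx, hDg g k y hy, hDg g _ _ (hbrgr h k x hx y hy), hDder, map_sub,
          ← hpρ h _ x hx, ← hpρ k _ y hy, show h + (g + k) = g + (h + k) by abel,
          show k + (g + h) = g + (h + k) by abel]
      | h0 => simp
      | hadd u v hu hv =>
        simp only [map_add, LinearMap.add_apply, hu, hv]
        abel
    | h0 => simp
    | hadd u v hu hv =>
      simp only [map_add, LinearMap.add_apply, hu, hv]
      abel
  · intro h x hx
    rw [hDg g h x hx]
    exact hpm _ _
  · have hfin : ∀ u, (Function.support fun g => Dg g u).Finite := by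
      intro u
      induction u using hl_induction ℒ hLint with
      | hom h x hx =>
        simp only [hDg _ h x hx]
        exact (hpf (D x)).preimage ((add_left_injective h).injOn)
      | h0 => simp
      | hadd u v hu hv =>
        simp only [map_add]
        exact (hu.union hv).subset (Function.support_add _ _)
    intro u
    refine ⟨hfin u, ?_⟩
    induction u using hl_induction ℒ hLint with
    | hom h x hx =>
      simp only [hDg _ h x hx]
      conv_lhs => rw [hps (D x)]
      exact (finsum_comp_equiv (Equiv.addRight h) (f := fun g => p g (D x))).symm
    | h0 => simp
    | hadd u v hu hv =>
      simp only [map_add]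
      rw [finsum_add_distrib (hfin u) (hfin v), ← hu, ← hv]
end

section
/- Oscillator realization of the centerless W(2,2) algebra: let A be a unital associative ℂ-algebra and let a, a⁺, b, b⁺ ∈ A satisfy a·a⁺ − a⁺·a = 1, with a⁺ invertible, b·b⁺ + b⁺·b = 1, b² = (b⁺)² = 0, and suppose a and a⁺ each commute with b and with b⁺. For n ∈ ℤ define L_n := (a⁺)^{n+1}·a and M_n := (a⁺)^{n+1}·b⁺·a, where (a⁺)^{n+1} denotes the integer power of the unit a⁺. Then, with [A,B] := A·B − B·A, for all m, n ∈ ℤ: [L_m, L_n] = (n−m)·L_{m+n}, [L_m, M_n] = (n−m)·M_{m+n}, and [M_m, M_n] = 0. -/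
theorem W22_step {A : Type*} [Ring A] (a : A) (u : Aˣ)
    (h : a * (u : A) = (u : A) * a + 1) (k : ℤ) :
    (a * ((u ^ k : Aˣ) : A) = ((u ^ k : Aˣ) : A) * a + k • ((u ^ (k - 1) : Aˣ) : A)) ↔
    (a * ((u ^ (k + 1) : Aˣ) : A) =
      ((u ^ (k + 1) : Aˣ) : A) * a + (k + 1) • ((u ^ (k + 1 - 1) : Aˣ) : A)) := by
  have e1 : ((u ^ (k + 1) : Aˣ) : A) = ((u ^ k : Aˣ) : A) * u := by
    rw [zpow_add_one, Units.val_mul]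
  have e2 : ((u ^ (k - 1) : Aˣ) : A) * u = ((u ^ k : Aˣ) : A) := by
    rw [← Units.val_mul, ← zpow_add_one, sub_add_cancel]
  rw [add_sub_cancel_right, e1, ← Units.mul_left_inj u, add_mul, smul_mul_assoc, e2,
    mul_assoc _ a, h, mul_add, mul_one, add_smul, one_smul]
  simp only [mul_assoc, add_assoc, add_comm, add_left_comm]

theorem W22_comm {A : Type*} [Ring A] (a : A) (u : Aˣ)
    (h : a * (u : A) = (u : A) * a + 1) (k : ℤ) :
    a * ((u ^ k : Aˣ) : A) = ((u ^ k : Aˣ) : A) * a + k • ((u ^ (k - 1) : Aˣ) : A) := by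
  induction k using Int.induction_on with
  | zero => simp
  | succ i ih => exact (W22_step a u h _).1 ih
  | pred i ih =>
    refine (W22_step a u h _).2 ?_
    rw [sub_add_cancel]
    exact ih

/-- Oscillator realization of the centerless W(2,2) algebra: in a unital
associative ℂ-algebra `A` with a bosonic oscillator `a, a⁺` (with `a⁺`
invertible) and a fermionic oscillator `b, b⁺` commuting with the bosonic one,
the elements `L_n = (a⁺)^{n+1}a` and `M_n = (a⁺)^{n+1}b⁺a` satisfy the
centerless W(2,2) relations under the commutator `[A,B] = AB − BA`. -/
theorem W22_oscillator_realization {A : Type*} [Ring A] [Algebra ℂ A]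
    (a b bp : A) (u : Aˣ)
    (hboson : a * (u : A) - (u : A) * a = 1)
    (hfermion : b * bp + bp * b = 1)
    (hb2 : b * b = 0) (hbp2 : bp * bp = 0)
    (hab : a * b = b * a) (habp : a * bp = bp * a)
    (hub : (u : A) * b = b * (u : A)) (hubp : (u : A) * bp = bp * (u : A))
    (Lo Mo : ℤ → A)
    (hLo : ∀ n : ℤ, Lo n = ((u ^ (n + 1) : Aˣ) : A) * a)
    (hMo : ∀ n : ℤ, Mo n = ((u ^ (n + 1) : Aˣ) : A) * bp * a) :
    ∀ m n : ℤ,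
      (Lo m * Lo n - Lo n * Lo m = (n - m) • Lo (m + n)) ∧
      (Lo m * Mo n - Mo n * Lo m = (n - m) • Mo (m + n)) ∧
      (Mo m * Mo n - Mo n * Mo m = 0) := by
  have h : a * (u : A) = (u : A) * a + 1 := by rw [← hboson]; abel
  have hL : ∀ m n : ℤ, Lo m * Lo n =
      ((u ^ (m + n + 2) : Aˣ) : A) * (a * a) + (n + 1) • Lo (m + n) := by
    intro m n
    have e1 : ((u ^ (m + n + 2) : Aˣ) : A) = ((u ^ (m + 1) : Aˣ) : A) * ((u ^ (n + 1) : Aˣ) : A) := by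
      rw [← Units.val_mul, ← zpow_add]; congr 2; ring
    have e2 : ((u ^ (m + n + 1) : Aˣ) : A) =
        ((u ^ (m + 1) : Aˣ) : A) * ((u ^ (n + 1 - 1) : Aˣ) : A) := by
      rw [← Units.val_mul, ← zpow_add]; congr 2; ring
    rw [hLo, hLo, hLo, e1, e2, mul_assoc _ a, ← mul_assoc a, W22_comm a u h, add_mul, mul_add]
    simp only [mul_assoc, smul_mul_assoc, mul_smul_comm]
  have hLL : ∀ m n : ℤ, Lo m * Lo n - Lo n * Lo m = (n - m) • Lo (m + n) := by
    intro m n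
    rw [hL m n, hL n m, add_comm n m, add_sub_add_left_eq_sub, ← sub_smul]
    congr 1; ring
  have hM : ∀ n, Mo n = Lo n * bp := by
    intro n
    rw [hMo, hLo, mul_assoc, mul_assoc, habp]
  have hc : ∀ n, bp * Lo n = Lo n * bp := by
    intro n
    have hu : ((u ^ (n + 1) : Aˣ) : A) * bp = bp * ((u ^ (n + 1) : Aˣ) : A) :=
      (Commute.units_zpow_left (show Commute (u : A) bp from hubp) (n + 1))
    rw [hLo, ← mul_assoc, ← hu, mul_assoc, mul_assoc, habp]
  have hMM : ∀ m n, Mo m * Mo n = 0 := by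
    intro m n
    rw [hM, hM, mul_assoc, ← mul_assoc bp, hc, mul_assoc (Lo n), hbp2, mul_zero, mul_zero]
  intro m n
  refine ⟨hLL m n, ?_, by rw [hMM, hMM, sub_zero]⟩
  rw [hM, hM, mul_assoc (Lo n), hc, ← mul_assoc, ← mul_assoc, ← sub_mul, hLL, smul_mul_assoc]
end
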